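/- arXiv:2104.10651 — 2 statements merged into one kernel-verified Lean document; each statement's English description precedes it below -/
import Mathlib

section
/- Let m_b be a mass function on a finite nonempty set Θ with belief function b, and let A ⊆ Θ be nonempty. For each nonempty B ⊆ A let v_B be defined by v_B(B) = m_b(B) + 1 − b(A), v_B(X) = m_b(X) for nonempty X ⊆ A with X ≠ B, and v_B(X) = 0 for X ⊄ A. Then the barycenter (1/(2^{|A|}−1)) Σ_{∅≠B⊆A} v_B of these 2^{|A|} − 1 vertices equals the mass function given by B ↦ m_b(B) + (1 − b(A))/(2^{|A|} − 1) for nonempty B ⊆ A and 0 otherwise, i.e. the unique L_2 conditional mass function of m_b given A. -/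
open Finset

/-- A mass function on the finite frame `Θ`. -/
def IsMassFun {Θ : Type*} [Fintype Θ] [DecidableEq Θ] (m : Finset Θ → ℝ) : Prop :=
  m ∅ = 0 ∧ (∀ B, 0 ≤ m B) ∧ ∑ B : Finset Θ, m B = 1

/-- Belief value `b(A) = ∑_{B ⊆ A} m(B)`. -/
def bel {Θ : Type*} [Fintype Θ] [DecidableEq Θ] (m : Finset Θ → ℝ) (A : Finset Θ) : ℝ :=
  ∑ B ∈ A.powerset, m B

/-- The vertex `v_B` of the `L₁` conditional simplex. -/
def vertexL1 {Θ : Type*} [Fintype Θ] [DecidableEq Θ] (mb : Finset Θ → ℝ) (A B : Finset Θ) :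
    Finset Θ → ℝ :=
  fun X => if X = B then mb B + 1 - bel mb A
           else if X ≠ ∅ ∧ X ⊆ A then mb X else 0

/-- The `L₂` conditional mass function of `mb` given `A`. -/
noncomputable def mL2 {Θ : Type*} [Fintype Θ] [DecidableEq Θ] (mb : Finset Θ → ℝ)
    (A : Finset Θ) : Finset Θ → ℝ :=
  fun B => if B ≠ ∅ ∧ B ⊆ A then mb B + (1 - bel mb A) / ((2 : ℝ) ^ A.card - 1) else 0

/-- the barycenter `(1/(2^{|A|}-1)) ∑_{∅≠B⊆A} v_B` of the `2^{|A|} - 1` vertices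
of the `L₁` conditional simplex equals the `L₂` conditional mass function of `mb` given `A`. -/
theorem stmt6 {Θ : Type*} [Fintype Θ] [DecidableEq Θ] [Nonempty Θ]
    (mb : Finset Θ → ℝ) (hmb : IsMassFun mb)
    (A : Finset Θ) (hA : A.Nonempty) :
    ∀ X : Finset Θ,
      (1 / ((2 : ℝ) ^ A.card - 1)) *
          ∑ B ∈ A.powerset.filter (fun B => B ≠ ∅), vertexL1 mb A B X = mL2 mb A X := by
  intro X
  have hc : ((A.powerset.filter (fun B => B ≠ ∅)).card : ℝ) = (2 : ℝ) ^ A.card - 1 := by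
    rw [Finset.filter_ne', Finset.card_erase_of_mem (Finset.empty_mem_powerset A),
      Finset.card_powerset, Nat.cast_sub Nat.one_le_two_pow]
    push_cast
    rfl
  have hpos : (2 : ℝ) ^ A.card - 1 ≠ 0 := by
    have : (1 : ℝ) < 2 ^ A.card := one_lt_pow₀ (by norm_num) hA.card_pos.ne'
    linarith
  by_cases hX : X ≠ ∅ ∧ X ⊆ A
  · have hv : ∀ B ∈ A.powerset.filter (fun B => B ≠ ∅),
        vertexL1 mb A B X = mb X + if X = B then 1 - bel mb A else 0 := by
      intro B _
      unfold vertexL1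
      by_cases h : X = B
      · subst h
        simp only [if_true]
        ring
      · rw [if_neg h, if_neg h, if_pos hX, add_zero]
    have hm : X ∈ A.powerset.filter (fun B => B ≠ ∅) := by
      rw [Finset.mem_filter, Finset.mem_powerset]
      exact ⟨hX.2, hX.1⟩
    rw [Finset.sum_congr rfl hv, Finset.sum_add_distrib, Finset.sum_const, nsmul_eq_mul, hc,
      Finset.sum_ite_eq, if_pos hm, mL2, if_pos hX]
    field_simp
  · rw [mL2, if_neg hX, Finset.sum_eq_zero, mul_zero]
    intro B hB
    rw [Finset.mem_filter, Finset.mem_powerset] at hB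
    unfold vertexL1
    rw [if_neg, if_neg hX]
    rintro rfl
    exact hX ⟨hB.2, hB.1⟩
end

section
/- Let m_b be a mass function on a finite nonempty set Θ with belief function b, and let A ⊆ Θ be nonempty. Then the L_2 conditional mass function of m_b given A, namely B ↦ m_b(B) + (1 − b(A))/(2^{|A|} − 1) for nonempty B ⊆ A and 0 for B ⊄ A, is itself a mass function: all its values are nonnegative and they sum to 1; hence it belongs to the conditioning simplex M_A. -/
open Finset

/-- The conditioning simplex `M_A`: mass functions supported on nonempty subsets of `A`. -/
def condSimplex {Θ : Type*} [Fintype Θ] [DecidableEq Θ] (A : Finset Θ) :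
    Set (Finset Θ → ℝ) :=
  {m | IsMassFun m ∧ ∀ B : Finset Θ, ¬(B ≠ ∅ ∧ B ⊆ A) → m B = 0}

/-- the `L₂` conditional mass function of `mb` given a nonempty `A` is itself a
mass function: its values are nonnegative and sum to `1`; hence it belongs to the
conditioning simplex `M_A`. -/
theorem stmt17 {Θ : Type*} [Fintype Θ] [DecidableEq Θ] [Nonempty Θ]
    (mb : Finset Θ → ℝ) (hmb : IsMassFun mb)
    (A : Finset Θ) (hA : A.Nonempty) :
    (∀ B : Finset Θ, 0 ≤ mL2 mb A B) ∧
    (∑ B : Finset Θ, mL2 mb A B = 1) ∧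
    mL2 mb A ∈ condSimplex A := by
  obtain ⟨h0, hn, h1⟩ := hmb
  have hc : (1 : ℝ) < 2 ^ A.card := one_lt_pow₀ (by norm_num) hA.card_pos.ne'
  have hd : (0 : ℝ) < 2 ^ A.card - 1 := by linarith
  have hb : bel mb A ≤ 1 := by
    rw [← h1]
    exact Finset.sum_le_sum_of_subset_of_nonneg (Finset.subset_univ _) (fun B _ _ => hn B)
  have hnn : ∀ B : Finset Θ, 0 ≤ mL2 mb A B := by
    intro B
    unfold mL2
    split_ifs
    · exact add_nonneg (hn B) (div_nonneg (by linarith) hd.le)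
    · exact le_rfl
  have hs : ∑ B : Finset Θ, mL2 mb A B = 1 := by
    unfold mL2
    rw [← Finset.sum_filter]
    have he : (Finset.univ.filter fun B : Finset Θ => B ≠ ∅ ∧ B ⊆ A) = A.powerset.erase ∅ := by
      ext B
      simp
    have hm : (∅ : Finset Θ) ∈ A.powerset := by simp
    have h2 := Finset.add_sum_erase A.powerset mb hm
    have h3 : ∑ B ∈ A.powerset.erase ∅, mb B = bel mb A := by
      unfold bel
      rw [← h2, h0, zero_add]
    have h4 : (((A.powerset.erase ∅).card : ℕ) : ℝ) = 2 ^ A.card - 1 := by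
      rw [Finset.card_erase_of_mem hm, Finset.card_powerset,
        Nat.cast_sub Nat.one_le_two_pow]
      push_cast
      rfl
    rw [he, Finset.sum_add_distrib, h3, Finset.sum_const, nsmul_eq_mul, h4,
      mul_div_cancel₀ _ hd.ne']
    ring
  refine ⟨hnn, hs, ⟨?_, hnn, hs⟩, ?_⟩
  · simp [mL2]
  · intro B hB
    exact if_neg hB
end
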